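/- Let p be an odd prime, n ≥ 1, and let R be a commutative ring with p·R = 0 and h ∈ R a nonzerodivisor. Let J ⊆ A(R) be the two-sided ideal of the Rees reduced Weyl algebra generated by x_1,…,x_n, y_1,…,y_n. Then every element a ∈ h·A(R) + J satisfies a^p ∈ h^{p−1}·A(R). -/

import Mathlib

noncomputable section

/-- The defining relations of the Rees reduced Weyl algebra `A(R)` (with parameter `h ∈ R`):
the `x_i` (indexed by `Sum.inl i`) commute, the `y_j` (indexed by `Sum.inr j`) commute,
`y_j x_i = x_i y_j + δ_{ij}·h`, and `x_i^p = y_j^p = 0`. -/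
inductive ReesWeylRel (p n : ℕ) (R : Type) [CommRing R] (h : R) :
    FreeAlgebra R (Fin n ⊕ Fin n) → FreeAlgebra R (Fin n ⊕ Fin n) → Prop
  | xx (i j : Fin n) :
      ReesWeylRel p n R h (FreeAlgebra.ι R (Sum.inl i) * FreeAlgebra.ι R (Sum.inl j))
        (FreeAlgebra.ι R (Sum.inl j) * FreeAlgebra.ι R (Sum.inl i))
  | yy (i j : Fin n) :
      ReesWeylRel p n R h (FreeAlgebra.ι R (Sum.inr i) * FreeAlgebra.ι R (Sum.inr j))
        (FreeAlgebra.ι R (Sum.inr j) * FreeAlgebra.ι R (Sum.inr i))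
  | yx (i j : Fin n) :
      ReesWeylRel p n R h (FreeAlgebra.ι R (Sum.inr j) * FreeAlgebra.ι R (Sum.inl i))
        (FreeAlgebra.ι R (Sum.inl i) * FreeAlgebra.ι R (Sum.inr j) +
          if i = j then algebraMap R (FreeAlgebra R (Fin n ⊕ Fin n)) h else 0)
  | xp (i : Fin n) : ReesWeylRel p n R h (FreeAlgebra.ι R (Sum.inl i) ^ p) 0
  | yp (j : Fin n) : ReesWeylRel p n R h (FreeAlgebra.ι R (Sum.inr j) ^ p) 0

/-- The Rees reduced Weyl algebra `A(R)` on `2n` generators with parameter `h ∈ R`. -/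
abbrev ReesWeyl (p n : ℕ) (R : Type) [CommRing R] (h : R) : Type :=
  RingQuot (ReesWeylRel p n R h)

/-- The generator `x_i` of the Rees reduced Weyl algebra. -/
def reesX (p n : ℕ) (R : Type) [CommRing R] (h : R) (i : Fin n) : ReesWeyl p n R h :=
  RingQuot.mkAlgHom R (ReesWeylRel p n R h) (FreeAlgebra.ι R (Sum.inl i))

/-- The generator `y_j` of the Rees reduced Weyl algebra. -/
def reesY (p n : ℕ) (R : Type) [CommRing R] (h : R) (j : Fin n) : ReesWeyl p n R h :=
  RingQuot.mkAlgHom R (ReesWeylRel p n R h) (FreeAlgebra.ι R (Sum.inr j))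

/-!
Let `B` be a ring with `p = 0` and `h ∈ B` a central element dividing every commutator. The
`p`-th power map induces a *ring homomorphism* `B → B / h ^ (p - 1) B`, whose kernel is therefore
a two-sided ideal; for `B = A(R)` it contains `h`, the `x_i` and the `y_j`.

Additivity is Jacobson's formula: for `z = uX + v` in `B[X]`,
`d/dX (z ^ p) = ∑ z ^ i u z ^ (p - 1 - i) = ad(z) ^ (p - 1) u`, which is divisible by
`h ^ (p - 1)`, so modulo `h ^ (p - 1)` only the extreme coefficients of `z ^ p` survive.
For multiplicativity, an additive map compatible with squares satisfies
`φ(ab + ba) = φ(a)φ(b) + φ(b)φ(a)`; since `φ(ab) = φ(ba)` and `p`-th powers are central, this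
reads `2φ(ab) = 2φ(a)φ(b)`, which settles odd `p`, while for `p = 2` the quotient is commutative.
-/

open Finset Polynomial LieAlgebra

attribute [local instance] LieRing.ofAssociativeRing

section PrimeCast

variable {B : Type*} [Ring B] {p : ℕ}

theorem isUnit_natCast_of_coprime (hB : (p : B) = 0) {m : ℕ} (hm : p.Coprime m) :
    IsUnit (m : B) := by
  obtain ⟨a, b, hab⟩ := Nat.isCoprime_iff_coprime.2 hm
  have left_inv : (b : B) * m = 1 := by
    simpa [hB] using congrArg (Int.cast : ℤ → B) hab
  exact ⟨⟨m, b, (Nat.cast_commute m _).eq.trans left_inv, left_inv⟩, rfl⟩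

theorem cast_choose_prime_sub_one (hp : p.Prime) (hB : (p : B) = 0) {m : ℕ} (hm : m < p) :
    ((p - 1).choose m : B) = (-1) ^ m := by
  induction m with
  | zero => simp
  | succ m ih =>
    have pascal : (p - 1).choose m + (p - 1).choose (m + 1) = p.choose (m + 1) := by
      conv_rhs => rw [← Nat.sub_add_cancel hp.one_le, Nat.choose_succ_succ]
    have choose_eq_zero : (p.choose (m + 1) : B) = 0 := by
      obtain ⟨k, hk⟩ := hp.dvd_choose_self m.succ_ne_zero hm
      rw [hk, Nat.cast_mul, hB, zero_mul]
    rw [← pascal, Nat.cast_add, ih (by lia)] at choose_eq_zero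
    rw [pow_succ, mul_neg_one]
    exact eq_neg_of_add_eq_zero_right choose_eq_zero

theorem sub_pow_prime_sub_one_of_commute (hp : p.Prime) (hB : (p : B) = 0) {x y : B}
    (hxy : Commute x y) :
    (x - y) ^ (p - 1) = ∑ i ∈ range p, x ^ i * y ^ (p - 1 - i) := by
  rw [sub_eq_add_neg, hxy.neg_right.add_pow, Nat.sub_add_cancel hp.one_le]
  refine sum_congr rfl fun i hi => ?_
  have hip : i < p := mem_range.1 hi
  rw [← Nat.choose_symm (by lia), cast_choose_prime_sub_one hp hB (by lia), mul_assoc,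
    ← (Commute.neg_one_right _).mul_pow, neg_mul_neg, mul_one]

theorem natCast_moduleEnd_eq_zero (hB : (p : B) = 0) : (p : Module.End ℤ B) = 0 := by
  ext w
  simp [Module.End.natCast_apply, hB]

theorem ad_pow_prime_sub_one (hp : p.Prime) (hB : (p : B) = 0) (z u : B) :
    (ad ℤ B z ^ (p - 1)) u = ∑ i ∈ range p, z ^ i * u * z ^ (p - 1 - i) := by
  rw [ad_eq_lmul_left_sub_lmul_right, Pi.sub_apply, sub_pow_prime_sub_one_of_commute hp
    (natCast_moduleEnd_eq_zero hB) (LinearMap.commute_mulLeft_right z z)]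
  simp [LinearMap.sum_apply, LinearMap.pow_mulLeft, LinearMap.pow_mulRight, mul_assoc]

theorem ad_pow_prime (hp : p.Prime) (hB : (p : B) = 0) (z : B) :
    ad ℤ B z ^ p = ad ℤ B (z ^ p) := by
  have hcomm := LinearMap.commute_mulLeft_right (R := ℤ) z z
  rw [ad_eq_lmul_left_sub_lmul_right, Pi.sub_apply, Pi.sub_apply, ← mul_pow_sub_one hp.ne_zero,
    sub_pow_prime_sub_one_of_commute hp (natCast_moduleEnd_eq_zero hB) hcomm, hcomm.mul_geom_sum₂,
    LinearMap.pow_mulLeft, LinearMap.pow_mulRight]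

end PrimeCast

section NoncommutativePolynomial

variable {B : Type*} [Ring B]

theorem derivative_pow_eq_sum (z : B[X]) (m : ℕ) :
    derivative (z ^ m) = ∑ i ∈ range m, z ^ i * derivative z * z ^ (m - 1 - i) := by
  induction m with
  | zero => simp
  | succ m ih =>
    rw [pow_succ, derivative_mul, ih, sum_range_succ, sum_mul, Nat.add_sub_cancel, Nat.sub_self,
      pow_zero, mul_one]
    congr 1
    refine sum_congr rfl fun i hi => ?_
    have him : i < m := mem_range.1 hi
    rw [mul_assoc _ _ z, ← pow_succ, show m - 1 - i + 1 = m - i by lia]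

theorem eq_C_mul_X_pow_add_C_of_derivative_eq_zero {p : ℕ} (hp : p.Prime) (hB : (p : B) = 0)
    {f : B[X]} (hf : derivative f = 0) (hdeg : f.natDegree ≤ p) :
    f = C (f.coeff p) * X ^ p + C (f.coeff 0) := by
  have middle_eq_zero {i : ℕ} (hi0 : i ≠ 0) (hip : i < p) : f.coeff i = 0 := by
    have hunit : IsUnit (i : B) :=
      isUnit_natCast_of_coprime hB (Nat.coprime_of_lt_prime hi0 hip hp)
    obtain ⟨k, rfl⟩ := Nat.exists_eq_succ_of_ne_zero hi0
    rw [← hunit.mul_left_eq_zero, Nat.succ_eq_add_one, Nat.cast_succ, ← coeff_derivative, hf,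
      coeff_zero]
  ext i
  rw [coeff_add, coeff_C_mul_X_pow, coeff_C]
  rcases eq_or_ne i 0 with rfl | hi0
  · simp [hp.ne_zero.symm]
  rcases lt_trichotomy i p with hip | rfl | hip
  · simp [middle_eq_zero hi0 hip, hi0, hip.ne]
  · simp [hi0]
  · simp [coeff_eq_zero_of_natDegree_lt (hdeg.trans_lt hip), hi0, hip.ne']

end NoncommutativePolynomial

section CentralElement

variable {B : Type*} [Ring B]

theorem isTwoSided_span_singleton {c : B} (hc : ∀ b, Commute c b) :
    (Ideal.span {c}).IsTwoSided where
  mul_mem_of_left b hx := by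
    obtain ⟨d, rfl⟩ := Ideal.mem_span_singleton'.1 hx
    exact Ideal.mem_span_singleton'.2 ⟨d * b, by rw [mul_assoc, mul_assoc, (hc b).eq]⟩

theorem mem_span_singleton_iff_dvd {c : B} (hc : ∀ b, Commute c b) {x : B} :
    x ∈ Ideal.span {c} ↔ c ∣ x := by
  simp only [Ideal.mem_span_singleton', dvd_def, (hc _).eq, eq_comm]

end CentralElement

/-- `h` is the parameter of a deformation of a commutative ring: it is central and divides every
commutator, so that `B / hB` is commutative. Commutators are written as Lie brackets. -/
structure IsDeformationParameter {B : Type*} [Ring B] (h : B) : Prop where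
  commute : ∀ b, Commute h b
  dvd_lie : ∀ a b : B, h ∣ ⁅a, b⁆

namespace IsDeformationParameter

theorem of_adjoin_eq_top {R A : Type*} [CommRing R] [Ring A] [Algebra R A]
    {h : A} (hc : ∀ a, Commute h a) {s : Set A} (hs : Algebra.adjoin R s = ⊤)
    (hlie : ∀ a ∈ s, ∀ b ∈ s, h ∣ ⁅a, b⁆) : IsDeformationParameter h := by
  have := isTwoSided_span_singleton hc
  let π := Ideal.Quotient.mkₐ R (Ideal.span {h})
  have dvd_lie_iff (a b : A) : h ∣ ⁅a, b⁆ ↔ Commute (π a) (π b) := by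
    rw [← mem_span_singleton_iff_dvd hc, ← Ideal.Quotient.eq_zero_iff_mem,
      ← Ideal.Quotient.mkₐ_eq_mk R, Ring.lie_def, map_sub, map_mul, map_mul, sub_eq_zero]
    rfl
  have commute_of_forall {a : A} (ha : ∀ b ∈ s, Commute (π a) (π b)) (b : A) :
      Commute (π a) (π b) := by
    have hb : π b ∈ Algebra.adjoin R (π '' s) := by
      rw [← AlgHom.map_adjoin, hs]
      exact ⟨b, trivial, rfl⟩
    exact Algebra.commute_of_mem_adjoin_of_forall_mem_commute hb (Set.forall_mem_image.2 ha)
  refine ⟨hc, fun a b => (dvd_lie_iff a b).2 (commute_of_forall (fun x hx => ?_) b)⟩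
  exact (commute_of_forall (fun y hy => (dvd_lie_iff x y).1 (hlie x hx y hy)) a).symm

variable {B : Type*} [Ring B] {h : B} (hh : IsDeformationParameter h)
include hh

theorem map {B' : Type*} [Ring B'] {f : B →+* B'} (hf : Function.Surjective f) :
    IsDeformationParameter (f h) where
  commute := hf.forall.2 fun b => (hh.commute b).map f
  dvd_lie := hf.forall₂.2 fun a b => by
    simpa only [Ring.lie_def, map_sub, map_mul] using map_dvd f (hh.dvd_lie a b)

theorem polynomial_C : IsDeformationParameter (C h) where
  commute f := by
    ext i
    rw [coeff_C_mul, coeff_mul_C, (hh.commute _).eq]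
  dvd_lie f g := by
    refine (C_dvd_iff_dvd_coeff _ _).2 fun n => ?_
    rw [Ring.lie_def, coeff_sub, coeff_mul, coeff_mul, ← Finset.Nat.sum_antidiagonal_swap (n := n),
      ← sum_sub_distrib]
    exact dvd_sum fun i _ => hh.dvd_lie _ _

theorem pow_dvd_ad_pow (k : ℕ) (z u : B) : h ^ k ∣ (ad ℤ B z ^ k) u := by
  induction k with
  | zero => simp
  | succ k ih =>
    obtain ⟨c, hc⟩ := ih
    have lie_eq : ⁅z, h ^ k * c⁆ = h ^ k * ⁅z, c⁆ := by
      rw [Ring.lie_def, Ring.lie_def, mul_sub, mul_assoc, ← mul_assoc z,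
        ← ((hh.commute z).pow_left k).eq, mul_assoc]
    rw [pow_succ' (ad ℤ B z), Module.End.mul_apply, hc, ad_apply, lie_eq, pow_succ]
    exact mul_dvd_mul_left _ (hh.dvd_lie z c)

variable {p : ℕ} (hp : p.Prime) (hB : (p : B) = 0) (hnil : h ^ (p - 1) = 0)
include hp hB hnil

theorem derivative_pow_prime_eq_zero (z : B[X]) : derivative (z ^ p) = 0 := by
  have hBX : (p : B[X]) = 0 := by rw [← C_eq_natCast, hB, C_0]
  have := hh.polynomial_C.pow_dvd_ad_pow (p - 1) z (derivative z)
  rwa [← C_pow, hnil, C_0, zero_dvd_iff, ad_pow_prime_sub_one hp hBX,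
    ← derivative_pow_eq_sum] at this

theorem add_pow_prime (u v : B) : (u + v) ^ p = u ^ p + v ^ p := by
  let z : B[X] := C u * X + C v
  let ev : B[X] →+* B := eval₂RingHom' (RingHom.id B) 1 Commute.one_right
  have hdeg : z.natDegree ≤ 1 := natDegree_linear_le
  have coeff_top : (z ^ p).coeff p = u ^ p := by
    simpa [z] using coeff_pow_of_natDegree_le (m := p) hdeg
  have coeff_bot : (z ^ p).coeff 0 = v ^ p := by
    simpa [z] using map_pow (constantCoeff (R := B)) z p
  have z_pow : z ^ p = C (u ^ p) * X ^ p + C (v ^ p) := by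
    rw [← coeff_top, ← coeff_bot]
    exact eq_C_mul_X_pow_add_C_of_derivative_eq_zero hp hB
      (hh.derivative_pow_prime_eq_zero hp hB hnil z) (by simpa using natDegree_pow_le_of_le p hdeg)
  have ev_C (b : B) : ev (C b) = b := eval_C
  have ev_X : ev X = 1 := eval_X
  calc (u + v) ^ p = ev (z ^ p) := by
        rw [map_pow, map_add, map_mul, ev_X, ev_C, ev_C, mul_one]
    _ = u ^ p + v ^ p := by
        rw [z_pow, map_add, map_mul, map_pow ev X, ev_X, ev_C, ev_C, one_pow, mul_one]

theorem commute_pow_prime (a b : B) : Commute (a ^ p) b := by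
  have := hh.pow_dvd_ad_pow p a b
  rw [ad_pow_prime hp hB, pow_eq_zero_of_le (Nat.sub_le p 1) hnil, zero_dvd_iff] at this
  exact sub_eq_zero.1 this

theorem mul_pow_prime_comm (a b : B) : (a * b) ^ p = (b * a) ^ p := by
  obtain ⟨c, hc⟩ := hh.dvd_lie a b
  rw [Ring.lie_def, sub_eq_iff_eq_add] at hc
  rw [hc, hh.add_pow_prime hp hB hnil, (hh.commute c).mul_pow,
    pow_eq_zero_of_le (Nat.sub_le p 1) hnil, zero_mul, zero_add]

theorem mul_pow_prime (a b : B) : (a * b) ^ p = a ^ p * b ^ p := by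
  rcases hp.eq_two_or_odd' with rfl | hodd
  · have h_eq_zero : h = 0 := by simpa using hnil
    have hab : Commute a b := commute_iff_lie_eq.2 (zero_dvd_iff.1 (h_eq_zero ▸ hh.dvd_lie a b))
    exact hab.mul_pow 2
  let φ : B →+ B := AddMonoidHom.mk' (· ^ p) (hh.add_pow_prime hp hB hnil)
  have map_sq (x : B) : φ (x * x) = φ x * φ x := (Commute.refl x).mul_pow p
  have map_jordan : φ (a * b) + φ (b * a) = φ a * φ b + φ b * φ a := by
    have := map_sq (a + b)
    simp only [add_mul, mul_add, map_add, map_sq] at this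
    rw [← sub_eq_zero] at this ⊢
    rw [← this]
    abel
  have map_comm : φ (b * a) = φ (a * b) := hh.mul_pow_prime_comm hp hB hnil b a
  have image_comm : φ b * φ a = φ a * φ b := hh.commute_pow_prime hp hB hnil b (φ a)
  rw [map_comm, image_comm, ← two_mul, ← two_mul] at map_jordan
  have two_isUnit : IsUnit ((2 : ℕ) : B) := isUnit_natCast_of_coprime hB hodd.coprime_two_right
  exact two_isUnit.mul_left_cancel map_jordan

/-- The Frobenius endomorphism of a deformation of characteristic `p` truncated at
`h ^ (p - 1) = 0`. -/
def frobenius : B →+* B where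
  toFun a := a ^ p
  map_one' := one_pow p
  map_mul' := hh.mul_pow_prime hp hB hnil
  map_zero' := zero_pow hp.ne_zero
  map_add' := hh.add_pow_prime hp hB hnil

omit hnil in
theorem pow_dvd_pow_prime_of_mem_span {s : Set B} (hs : ∀ x ∈ s, h ^ (p - 1) ∣ x ^ p) {a : B}
    (ha : a ∈ TwoSidedIdeal.span s) : h ^ (p - 1) ∣ a ^ p := by
  have hc (b : B) : Commute (h ^ (p - 1)) b := (hh.commute b).pow_left _
  have := isTwoSided_span_singleton hc
  let π := Ideal.Quotient.mk (Ideal.span {h ^ (p - 1)})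
  have hp_zero : (p : B ⧸ Ideal.span {h ^ (p - 1)}) = 0 := by rw [← map_natCast π, hB, map_zero]
  have hnil : π h ^ (p - 1) = 0 := by rw [← map_pow, Ideal.Quotient.mk_singleton_self]
  let φ := ((hh.map Ideal.Quotient.mk_surjective).frobenius hp hp_zero hnil).comp π
  have mem_ker_iff (x : B) : x ∈ TwoSidedIdeal.ker φ ↔ h ^ (p - 1) ∣ x ^ p := by
    rw [← mem_span_singleton_iff_dvd hc, ← Ideal.Quotient.eq_zero_iff_mem, map_pow]
    exact TwoSidedIdeal.mem_ker φ
  exact (mem_ker_iff a).1 (TwoSidedIdeal.span_le.2 (fun x hx => (mem_ker_iff x).2 (hs x hx)) ha)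

end IsDeformationParameter

namespace ReesWeyl

variable (p n : ℕ) (R : Type) [CommRing R] (h : R)

theorem adjoin_range_reesX_union_range_reesY :
    Algebra.adjoin R (Set.range (reesX p n R h) ∪ Set.range (reesY p n R h)) = ⊤ := by
  let π := RingQuot.mkAlgHom R (ReesWeylRel p n R h)
  have image_range_ι : π '' Set.range (FreeAlgebra.ι R) =
      Set.range (reesX p n R h) ∪ Set.range (reesY p n R h) := by
    rw [← Set.range_comp, ← Set.Sum.elim_range]
    congr 1
    ext (i | i) <;> rfl
  rw [← image_range_ι, ← AlgHom.map_adjoin, FreeAlgebra.adjoin_range_ι, Algebra.map_top]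
  exact AlgHom.range_eq_top π |>.2 (RingQuot.mkAlgHom_surjective R _)

variable {p n R}

theorem commute_reesX (i j : Fin n) : Commute (reesX p n R h i) (reesX p n R h j) := by
  simpa [reesX, Commute, SemiconjBy] using
    RingQuot.mkAlgHom_rel R (ReesWeylRel.xx (p := p) (h := h) i j)

theorem commute_reesY (i j : Fin n) : Commute (reesY p n R h i) (reesY p n R h j) := by
  simpa [reesY, Commute, SemiconjBy] using
    RingQuot.mkAlgHom_rel R (ReesWeylRel.yy (p := p) (h := h) i j)

theorem lie_reesY_reesX (i j : Fin n) :
    ⁅reesY p n R h j, reesX p n R h i⁆ =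
      if i = j then algebraMap R (ReesWeyl p n R h) h else 0 := by
  have := RingQuot.mkAlgHom_rel R (ReesWeylRel.yx (p := p) (h := h) i j)
  rw [map_mul, map_add, map_mul, apply_ite (RingQuot.mkAlgHom R _), map_zero, AlgHom.commutes]
    at this
  exact sub_eq_iff_eq_add'.2 this

theorem reesX_pow (i : Fin n) : reesX p n R h i ^ p = 0 := by
  simpa [reesX] using RingQuot.mkAlgHom_rel R (ReesWeylRel.xp (p := p) (h := h) i)

theorem reesY_pow (j : Fin n) : reesY p n R h j ^ p = 0 := by
  simpa [reesY] using RingQuot.mkAlgHom_rel R (ReesWeylRel.yp (p := p) (h := h) j)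

variable (p n)

theorem isDeformationParameter : IsDeformationParameter (algebraMap R (ReesWeyl p n R h) h) := by
  have dvd_lie_yx (i j : Fin n) :
      algebraMap R (ReesWeyl p n R h) h ∣ ⁅reesY p n R h j, reesX p n R h i⁆ := by
    rw [lie_reesY_reesX]
    split_ifs
    exacts [dvd_rfl, dvd_zero _]
  refine .of_adjoin_eq_top (Algebra.commutes h)
    (adjoin_range_reesX_union_range_reesY p n R h) ?_
  rintro _ (⟨i, rfl⟩ | ⟨i, rfl⟩) _ (⟨j, rfl⟩ | ⟨j, rfl⟩)
  · rw [commute_iff_lie_eq.1 (commute_reesX h i j)]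
    exact dvd_zero _
  · rw [← lie_skew]
    exact dvd_neg.2 (dvd_lie_yx i j)
  · exact dvd_lie_yx j i
  · rw [commute_iff_lie_eq.1 (commute_reesY h i j)]
    exact dvd_zero _

end ReesWeyl

theorem pow_p_of_augmentation_ideal_divisible_by_h_pow_p_sub_one_general
    (p n : ℕ) (hp : p.Prime) (R : Type) [CommRing R] (hpR : (p : R) = 0) (h : R)
    (a : ReesWeyl p n R h)
    (ha : ∃ c : ReesWeyl p n R h, ∃ j ∈ TwoSidedIdeal.span
        (Set.range (reesX p n R h) ∪ Set.range (reesY p n R h)),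
      a = algebraMap R (ReesWeyl p n R h) h * c + j) :
    ∃ c : ReesWeyl p n R h,
      a ^ p = algebraMap R (ReesWeyl p n R h) h ^ (p - 1) * c := by
  obtain ⟨c, j, hj, rfl⟩ := ha
  have hpA : (p : ReesWeyl p n R h) = 0 := by
    rw [← map_natCast (algebraMap R (ReesWeyl p n R h)), hpR, map_zero]
  let generators : Set (ReesWeyl p n R h) :=
    insert (algebraMap R _ h) (Set.range (reesX p n R h) ∪ Set.range (reesY p n R h))
  have dvd_pow_generators : ∀ x ∈ generators, algebraMap R _ h ^ (p - 1) ∣ x ^ p := by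
    rintro _ (rfl | ⟨i, rfl⟩ | ⟨i, rfl⟩)
    · exact pow_dvd_pow _ (Nat.sub_le p 1)
    · exact ReesWeyl.reesX_pow h i ▸ dvd_zero _
    · exact ReesWeyl.reesY_pow h i ▸ dvd_zero _
  have hc : algebraMap R _ h * c ∈ TwoSidedIdeal.span generators :=
    TwoSidedIdeal.mul_mem_right _ _ _ (TwoSidedIdeal.subset_span (Set.mem_insert _ _))
  exact (ReesWeyl.isDeformationParameter p n h).pow_dvd_pow_prime_of_mem_span hp hpA
    dvd_pow_generators
    (TwoSidedIdeal.add_mem _ hc (TwoSidedIdeal.span_mono (Set.subset_insert _ _) hj))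

/-- if `J ⊆ A(R)` is the two-sided ideal generated by `x_1,…,x_n,y_1,…,y_n`,
then every element of `h·A(R) + J` has its `p`-th power divisible by `h^{p−1}`. -/
theorem pow_p_of_augmentation_ideal_divisible_by_h_pow_p_sub_one
    (p n : ℕ) (hp : p.Prime) (hodd : p ≠ 2) (hn : 1 ≤ n)
    (R : Type) [CommRing R] (hpR : (p : R) = 0) (h : R) (hh : h ∈ nonZeroDivisors R)
    (a : ReesWeyl p n R h)
    (ha : ∃ c : ReesWeyl p n R h, ∃ j ∈ TwoSidedIdeal.span
        (Set.range (reesX p n R h) ∪ Set.range (reesY p n R h)),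
      a = algebraMap R (ReesWeyl p n R h) h * c + j) :
    ∃ c : ReesWeyl p n R h,
      a ^ p = algebraMap R (ReesWeyl p n R h) h ^ (p - 1) * c := by
  exact pow_p_of_augmentation_ideal_divisible_by_h_pow_p_sub_one_general p n hp R hpR h a ha
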